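/- arXiv:1104.4551 — 2 statements merged into one kernel-verified Lean document; each statement's English description precedes it below -/
import Mathlib

section
/- (Converse part of Malament's theorem.) Let A = {p + t•v : t ∈ ℝ} be an inertial observer in Minkowski spacetime, with v a future-directed unit timelike vector, and let R be the Poincaré–Einstein simultaneity relation relative to A: x R y ↔ η(x − y, v) = 0. Then: (i) R is an equivalence relation; (ii) R is nontrivial, i.e., not all pairs of events are related by R and some event on A is related by R to an event not on A; (iii) R is invariant under every causal automorphism f with f(A) = A, i.e., for all events x, y: x R y ↔ f(x) R f(y). -/
/-!
Causal connectibility `κ` alone determines null separation and null hyperplanes, and these determine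
the simultaneity relation of `A`.

* Two distinct events `x`, `y` are null separated iff `x κ y` and some third event `z` satisfies:
  every `w` with `w κ x` and `w κ y` has `w κ z` (`null_iff`). For null `y - x` the midpoint is such
  a `z`; for timelike `y - x` the points of null lines through `x` and through `y` exclude every `z`.
* If `c`, `c'` are distinct and null separated, the null hyperplane `η(x - c, c' - c) = 0` consists of
  the light line through `c`, `c'` and the events that are `κ`-related to no event of that line
  (`hyper_iff`). Parallel null hyperplanes are the disjoint ones.

Hence a causal automorphism `f` with `f(A) = A`, acting on `A` by `p + a v ↦ p + g(a) v`, maps the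
light lines through `A` in a null direction `k` to those in one null direction `K`, and likewise for
null hyperplanes (`direction_map`). An event `x` at time `t` and distance `r` from `A` in the unit
direction `n` lies on the light lines through `a = t - r` and `b = t + r` with directions `v + n` and
`v - n`, so the time of `f x` is `(g a + g b) / 2`. For a unit `m` orthogonal to `v` and `n`, both `x`
and its reflection in `A` lie on the null hyperplane through `t` with direction `v + m`; comparing
the images of the two gives `g t = (g a + g b) / 2`. So the time of `f x` is `g` of the time of `x`
(`time_map`), and `g` is injective.
-/

/-- Minkowski spacetime: ℝ⁴ as functions `Fin 4 → ℝ`. -/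
abbrev M4 : Type := Fin 4 → ℝ

/-- The Minkowski bilinear form. -/
def eta (x y : M4) : ℝ := x 0 * y 0 - x 1 * y 1 - x 2 * y 2 - x 3 * y 3

/-- Causal connectibility. -/
def kappa (x y : M4) : Prop := eta (x - y) (x - y) ≥ 0

/-! ### The Minkowski form -/

lemma eta_comm (x y : M4) : eta x y = eta y x := by simp only [eta]; ring

lemma eta_add_left (x y z : M4) : eta (x + y) z = eta x z + eta y z := by
  simp only [eta, Pi.add_apply]; ring

lemma eta_add_right (x y z : M4) : eta z (x + y) = eta z x + eta z y := by
  simp only [eta, Pi.add_apply]; ring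

lemma eta_sub_left (x y z : M4) : eta (x - y) z = eta x z - eta y z := by
  simp only [eta, Pi.sub_apply]; ring

lemma eta_sub_right (x y z : M4) : eta z (x - y) = eta z x - eta z y := by
  simp only [eta, Pi.sub_apply]; ring

lemma eta_smul_left (s : ℝ) (x z : M4) : eta (s • x) z = s * eta x z := by
  simp only [eta, Pi.smul_apply, smul_eq_mul]; ring

lemma eta_smul_right (s : ℝ) (x z : M4) : eta z (s • x) = s * eta z x := by
  simp only [eta, Pi.smul_apply, smul_eq_mul]; ring

lemma eta_zero_left (z : M4) : eta 0 z = 0 := by simp [eta]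

/-- The orthogonal complement of a timelike vector is negative definite. -/
lemma perp_neg {v e : M4} (hv : 0 < eta v v) (h : eta e v = 0) (he : e ≠ 0) : eta e e < 0 := by
  simp only [eta] at *
  have h0 : 0 < v 0 ^ 2 := by nlinarith [sq_nonneg (v 1), sq_nonneg (v 2), sq_nonneg (v 3)]
  have hs : 0 < e 1 ^ 2 + e 2 ^ 2 + e 3 ^ 2 := by
    by_contra! hs
    have h1 : e 1 = 0 := by
      apply pow_eq_zero_iff (two_ne_zero) |>.1
      nlinarith [sq_nonneg (e 1), sq_nonneg (e 2), sq_nonneg (e 3)]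
    have h2 : e 2 = 0 := by
      apply pow_eq_zero_iff (two_ne_zero) |>.1
      nlinarith [sq_nonneg (e 1), sq_nonneg (e 2), sq_nonneg (e 3)]
    have h3 : e 3 = 0 := by
      apply pow_eq_zero_iff (two_ne_zero) |>.1
      nlinarith [sq_nonneg (e 1), sq_nonneg (e 2), sq_nonneg (e 3)]
    have hv0 : v 0 ≠ 0 := by
      intro hv0; rw [hv0] at h0; norm_num at h0
    have h4 : e 0 = 0 := by
      rw [h1, h2, h3] at h
      have : e 0 * v 0 = 0 := by linarith
      exact (mul_eq_zero.1 this).resolve_right hv0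
    apply he
    ext i
    fin_cases i <;> simp [*]
  have key : (e 0 * v 0) ^ 2 ≤
      (e 1 ^ 2 + e 2 ^ 2 + e 3 ^ 2) * (v 1 ^ 2 + v 2 ^ 2 + v 3 ^ 2) := by
    have : e 0 * v 0 = e 1 * v 1 + e 2 * v 2 + e 3 * v 3 := by linarith
    rw [this]
    nlinarith [sq_nonneg (e 1 * v 2 - e 2 * v 1), sq_nonneg (e 1 * v 3 - e 3 * v 1),
      sq_nonneg (e 2 * v 3 - e 3 * v 2)]
  have hp := mul_pos hs hv
  have : v 0 ^ 2 * (e 0 * e 0 - e 1 * e 1 - e 2 * e 2 - e 3 * e 3) < 0 := by nlinarith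
  by_contra! hc
  nlinarith [mul_nonneg h0.le hc]

lemma exists_timelike : ∃ v : M4, eta v v = 1 := ⟨![1, 0, 0, 0], by simp [eta]⟩

/-- A nonzero null vector is not orthogonal to a timelike vector. -/
lemma null_time_ne {v d : M4} (hv : 0 < eta v v) (hd : eta d d = 0) (h0 : d ≠ 0) :
    eta d v ≠ 0 := fun h => by
  have := perp_neg hv h h0
  linarith

/-- A vector orthogonal to a nonzero null vector `d` is spacelike or a multiple of `d`. -/
lemma null_perp {q d : M4} (hd : eta d d = 0) (h0 : d ≠ 0) (h : eta q d = 0) :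
    eta q q < 0 ∨ ∃ s : ℝ, q = s • d := by
  obtain ⟨v, hv⟩ := exists_timelike
  have hv' : 0 < eta v v := by linarith
  have hdv := null_time_ne hv' hd h0
  by_cases hq : q - (eta q v / eta d v) • d = 0
  · exact Or.inr ⟨_, sub_eq_zero.1 hq⟩
  · left
    have := perp_neg hv' (by
      rw [eta_sub_left, eta_smul_left]; field_simp; ring) hq
    have hc := eta_comm d q
    simp only [eta_sub_left, eta_sub_right, eta_smul_left, eta_smul_right, hd, h, hc] at this
    linarith

/-- Two vectors admit a common nonzero orthogonal vector, by counting dimensions. -/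
lemma exists_perp (u n : M4) : ∃ w : M4, w ≠ 0 ∧ eta w u = 0 ∧ eta w n = 0 := by
  let F : M4 →ₗ[ℝ] (Fin 2 → ℝ) :=
    { toFun := fun w => ![eta w u, eta w n]
      map_add' := fun x y => by
        ext i; fin_cases i <;> simp [eta_add_left]
      map_smul' := fun s x => by
        ext i; fin_cases i <;> simp [eta_smul_left] }
  have hF : LinearMap.ker F ≠ ⊥ := LinearMap.ker_ne_bot_of_finrank_lt (by simp [M4])
  obtain ⟨w, hw, h0⟩ := (Submodule.ne_bot_iff _).1 hF
  have hw' : F w = 0 := hw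
  exact ⟨w, h0, by simpa [F] using congrFun hw' 0, by simpa [F] using congrFun hw' 1⟩

/-- Rescaling a spacelike vector to prescribed squared length. -/
lemma exists_scale {e : M4} {D : ℝ} (hD : 0 < D) (he : eta e e < 0) :
    ∃ s : ℝ, eta (s • e) (s • e) = -D := by
  refine ⟨√(D / -eta e e), ?_⟩
  rw [eta_smul_left, eta_smul_right, ← mul_assoc, Real.mul_self_sqrt (by
    apply div_nonneg hD.le; linarith)]
  have : eta e e ≠ 0 := he.ne
  field_simp

/-! ### Null separation and null hyperplanes in terms of causality -/

/-- If every event causally related to both `0` and `d` is causally related to `e`, then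
`0 ≤ η(k, e) ≤ η(e, e)` for each null `k` with `η(k, d) = η(d, d)`: test the hypothesis on the
multiples `s k` with `s ≤ 1/2`. -/
lemma test_null {d e k : M4} (hD : 0 < eta d d)
    (H : ∀ q, 0 ≤ eta q q → 0 ≤ eta (q - d) (q - d) → 0 ≤ eta (q - e) (q - e))
    (hk : eta k k = 0) (hkd : eta k d = eta d d) : 0 ≤ eta k e ∧ eta k e ≤ eta e e := by
  have T : ∀ s : ℝ, s ≤ 1 / 2 → 2 * s * eta k e ≤ eta e e := by
    intro s hs
    have hc := eta_comm d k
    have hc' := eta_comm e k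
    have := H (s • k) (by simp [eta_smul_left, eta_smul_right, hk]) (by
      simp only [eta_sub_left, eta_sub_right, eta_smul_left, eta_smul_right, hk, hc, hkd]
      nlinarith)
    simp only [eta_sub_left, eta_sub_right, eta_smul_left, eta_smul_right, hk, hc'] at this
    linarith
  have h0 := T 0 (by norm_num)
  refine ⟨?_, by linarith [T (1 / 2) le_rfl]⟩
  by_contra! hneg
  have hs : (eta e e + 1) / (2 * eta k e) ≤ 0 :=
    div_nonpos_of_nonneg_of_nonpos (by linarith) (by linarith)
  have := T ((eta e e + 1) / (2 * eta k e)) (by linarith)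
  have h2 : 2 * ((eta e e + 1) / (2 * eta k e)) * eta k e = eta e e + 1 := by
    have := hneg.ne
    field_simp
  linarith

/-- For timelike `d`, only `0` and `d` are causally related to everything that is causally related
to both `0` and `d`. -/
lemma timelike_rigid {d e : M4} (hD : 0 < eta d d)
    (H : ∀ q, 0 ≤ eta q q → 0 ≤ eta (q - d) (q - d) → 0 ≤ eta (q - e) (q - e)) :
    e = 0 ∨ e = d := by
  have H' : ∀ q, 0 ≤ eta q q → 0 ≤ eta (q - d) (q - d) →
      0 ≤ eta (q - (d - e)) (q - (d - e)) := by
    intro q h1 h2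
    have := H (d - q) (by
      simp only [eta_sub_left, eta_sub_right] at h2 ⊢; linarith) (by
      simp only [eta_sub_left, eta_sub_right] at h1 ⊢; linarith)
    simp only [eta_sub_left, eta_sub_right] at this ⊢; linarith
  -- `e = α d + ε` with `ε ⊥ d`, and `k = d ± ν` with `ν ⊥ d` of the length of `d`, parallel to `ε`
  set D := eta d d with hDdef
  set α := eta e d / D with hα
  set ε := e - α • d with hε
  have hαD : α * D = eta e d := by rw [hα]; field_simp
  have hεd : eta ε d = 0 := by
    rw [hε, eta_sub_left, eta_smul_left, ← hDdef, hαD]; ring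
  have hee : e = α • d + ε := by rw [hε]; abel
  obtain ⟨ν, hνd, hνν, hνε⟩ : ∃ ν, eta ν d = 0 ∧ eta ν ν = -D ∧
      eta ν ε ^ 2 = -(D * eta ε ε) := by
    by_cases h : ε = 0
    · obtain ⟨w, hw0, hw, -⟩ := exists_perp d d
      obtain ⟨s, hs⟩ := exists_scale hD (perp_neg hD hw hw0)
      exact ⟨s • w, by rw [eta_smul_left, hw]; ring, hs, by simp [h, eta]⟩
    · obtain ⟨s, hs⟩ := exists_scale hD (perp_neg hD hεd h)
      refine ⟨s • ε, by rw [eta_smul_left, hεd]; ring, hs, ?_⟩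
      rw [eta_smul_left, eta_smul_right] at hs
      rw [eta_smul_left]
      linear_combination (eta ε ε) * hs
  have c1 := eta_comm d ν
  have c2 := eta_comm d ε
  have n1 : eta (d + ν) (d + ν) = 0 := by
    simp only [eta_add_left, eta_add_right]; linarith
  have n2 : eta (d - ν) (d - ν) = 0 := by
    simp only [eta_sub_left, eta_sub_right]; linarith
  have d1 : eta (d + ν) d = eta d d := by rw [eta_add_left]; linarith
  have d2 : eta (d - ν) d = eta d d := by rw [eta_sub_left]; linarith
  obtain ⟨a1, a2⟩ := test_null hD H n1 d1
  obtain ⟨b1, b2⟩ := test_null hD H n2 d2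
  obtain ⟨a3, -⟩ := test_null hD H' n1 d1
  obtain ⟨b3, -⟩ := test_null hD H' n2 d2
  have e1 : eta (d + ν) e = α * D + eta ν ε := by
    rw [hee]; simp only [eta_add_left, eta_add_right, eta_smul_right]
    rw [c2, hεd, hνd]; ring
  have e2 : eta (d - ν) e = α * D - eta ν ε := by
    rw [hee]; simp only [eta_sub_left, eta_add_right, eta_smul_right]
    rw [c2, hεd, hνd]; ring
  rw [eta_sub_right, d1, ← hDdef] at a3
  rw [eta_sub_right, d2, ← hDdef] at b3
  have e3 : D * eta e e = eta (d + ν) e * eta (d - ν) e := by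
    rw [e1, e2, hee]
    simp only [eta_add_left, eta_add_right, eta_smul_right, eta_smul_left]
    rw [c2, hεd, ← hDdef]
    linear_combination hνε
  generalize eta (d + ν) e = P at *
  generalize eta (d - ν) e = Q at *
  have m1 : D * P ≤ P * Q := by rw [← e3]; exact mul_le_mul_of_nonneg_left a2 hD.le
  have m2 : D * Q ≤ P * Q := by rw [← e3]; exact mul_le_mul_of_nonneg_left b2 hD.le
  have z1 : P * (D - Q) = 0 := le_antisymm (by linarith) (mul_nonneg a1 (by linarith))
  have z2 : Q * (D - P) = 0 := le_antisymm (by linarith) (mul_nonneg b1 (by linarith))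
  have hPQ : P = Q := mul_right_cancel₀ hD.ne' (by linarith)
  have hε0 : ε = 0 := by
    by_contra h
    have := perp_neg hD hεd h
    have h0 : eta ν ε = 0 := by linarith
    rw [h0] at hνε
    nlinarith
  subst hPQ
  rcases mul_eq_zero.1 z1 with h | h
  · left
    have : α = 0 := by
      have : α * D = 0 := by linarith
      exact (mul_eq_zero.1 this).resolve_right hD.ne'
    rw [hee, hε0, this]; simp
  · right
    have : α = 1 := by
      have : α * D = 1 * D := by linarith
      exact mul_right_cancel₀ hD.ne' this
    rw [hee, hε0, this]; simp

/-- Null separation of distinct events in terms of `κ`. -/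
lemma null_iff {x y : M4} (hxy : x ≠ y) : eta (x - y) (x - y) = 0 ↔
    kappa x y ∧ ∃ z, z ≠ x ∧ z ≠ y ∧ ∀ w, kappa w x → kappa w y → kappa w z := by
  constructor
  · intro h
    refine ⟨h.ge, x + (1 / 2 : ℝ) • (y - x), ?_, ?_, ?_⟩
    · intro h'
      have : (1 / 2 : ℝ) • (y - x) = 0 := by simpa using h'
      rcases smul_eq_zero.1 this with h | h
      · norm_num at h
      · exact hxy (sub_eq_zero.1 h).symm
    · intro h'
      have : (1 / 2 : ℝ) • (y - x) = 0 := by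
        have : (y - x) - (1 / 2 : ℝ) • (y - x) = 0 := by nth_rw 1 [← h']; abel
        rw [← this]; module
      rcases smul_eq_zero.1 this with h | h
      · norm_num at h
      · exact hxy (sub_eq_zero.1 h).symm
    · intro w h1 h2
      have : eta (w - (x + (1 / 2 : ℝ) • (y - x))) (w - (x + (1 / 2 : ℝ) • (y - x))) =
          (eta (w - x) (w - x) + eta (w - y) (w - y)) / 2 - eta (x - y) (x - y) / 4 := by
        simp only [eta, Pi.sub_apply, Pi.add_apply, Pi.smul_apply, smul_eq_mul]; ring
      simp only [kappa] at *
      rw [this, h]; linarith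
  · rintro ⟨hk, z, hzx, hzy, H⟩
    by_contra hne
    have hD : 0 < eta (y - x) (y - x) := by
      have : eta (y - x) (y - x) = eta (x - y) (x - y) := by
        simp only [eta, Pi.sub_apply]; ring
      rw [this]; exact lt_of_le_of_ne hk (Ne.symm hne)
    have := timelike_rigid (e := z - x) hD (fun q h1 h2 => by
      have := H (x + q) (by simpa [kappa] using h1)
        (by rw [kappa, show x + q - y = q - (y - x) by abel]; exact h2)
      rw [kappa, show x + q - z = q - (z - x) by abel] at this
      exact this)
    rcases this with h | h
    · exact hzx (sub_eq_zero.1 h)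
    · exact hzy (sub_left_injective h)

/-- The light line through distinct null separated events, in terms of null separation. -/
lemma line_iff {c d y : M4} (hd : eta d d = 0) (h0 : d ≠ 0) :
    (eta (y - c) (y - c) = 0 ∧ eta (y - (c + d)) (y - (c + d)) = 0) ↔ ∃ s : ℝ, y = c + s • d := by
  constructor
  · rintro ⟨h1, h2⟩
    have h3 : eta (y - c) d = 0 := by
      have := eta_comm d (y - c)
      rw [show y - (c + d) = (y - c) - d by abel, eta_sub_left _ d, eta_sub_right _ d,
        eta_sub_right _ d] at h2
      linarith
    rcases null_perp hd h0 h3 with h | ⟨s, hs⟩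
    · linarith
    · exact ⟨s, by rw [← hs]; abel⟩
  · rintro ⟨s, rfl⟩
    rw [show c + s • d - c = s • d by abel, show c + s • d - (c + d) = (s - 1) • d by module]
    simp [eta_smul_left, eta_smul_right, hd]

/-- The null hyperplane containing a light line, in terms of null separation and `κ`. -/
lemma hyper_iff {c d x : M4} (hd : eta d d = 0) (h0 : d ≠ 0) :
    eta (x - c) d = 0 ↔
    (eta (x - c) (x - c) = 0 ∧ eta (x - (c + d)) (x - (c + d)) = 0) ∨
      ∀ y, eta (y - c) (y - c) = 0 → eta (y - (c + d)) (y - (c + d)) = 0 → ¬ kappa x y := by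
  constructor
  · intro h
    rcases null_perp hd h0 h with hn | ⟨s, hs⟩
    · right
      intro y h1 h2
      obtain ⟨s, rfl⟩ := (line_iff hd h0).1 ⟨h1, h2⟩
      have := eta_comm d (x - c)
      rw [kappa, show x - (c + s • d) = (x - c) - s • d by abel]
      rw [eta_sub_left _ (s • d), eta_sub_right _ (s • d), eta_sub_right _ (s • d)]
      simp only [eta_smul_left, eta_smul_right]
      rw [this, h, hd]
      linarith
    · exact Or.inl ((line_iff hd h0).2 ⟨s, by rw [← hs]; abel⟩)
  · rintro (h | h)
    · obtain ⟨s, rfl⟩ := (line_iff hd h0).1 h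
      rw [show c + s • d - c = s • d by abel, eta_smul_left, hd, mul_zero]
    · by_contra hne
      have hl := (line_iff (c := c) hd h0).2
        ⟨eta (x - c) (x - c) / (2 * eta (x - c) d), rfl⟩
      apply h _ hl.1 hl.2
      have := eta_comm d (x - c)
      rw [kappa, ← sub_sub]
      rw [eta_sub_left _ (_ • d), eta_sub_right _ (_ • d), eta_sub_right _ (_ • d)]
      simp only [eta_smul_left, eta_smul_right]
      rw [this, hd]
      apply ge_of_eq
      field_simp
      ring

/-! ### Causal automorphisms -/

lemma map_null {f : M4 → M4} (hf : Function.Bijective f)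
    (hk : ∀ x y : M4, kappa x y ↔ kappa (f x) (f y)) (x y : M4) :
    eta (x - y) (x - y) = 0 ↔ eta (f x - f y) (f x - f y) = 0 := by
  by_cases hxy : x = y
  · subst hxy; simp [eta]
  rw [null_iff hxy, null_iff (hf.1.ne hxy), ← hk]
  apply and_congr_right
  intro _
  constructor
  · rintro ⟨z, h1, h2, H⟩
    refine ⟨f z, hf.1.ne h1, hf.1.ne h2, fun w => ?_⟩
    obtain ⟨w, rfl⟩ := hf.2 w
    rw [← hk, ← hk, ← hk]
    exact H w
  · rintro ⟨z, h1, h2, H⟩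
    obtain ⟨z, rfl⟩ := hf.2 z
    refine ⟨z, fun h => h1 (h ▸ rfl), fun h => h2 (h ▸ rfl), fun w => ?_⟩
    have := H (f w)
    rwa [← hk, ← hk, ← hk] at this

/-- Causal automorphisms map null hyperplanes to null hyperplanes. -/
lemma map_hyper {f : M4 → M4} (hf : Function.Bijective f)
    (hk : ∀ x y : M4, kappa x y ↔ kappa (f x) (f y)) {c d : M4} (hd : eta d d = 0) (h0 : d ≠ 0)
    (x : M4) : eta (x - c) d = 0 ↔ eta (f x - f c) (f (c + d) - f c) = 0 := by
  have hd' : eta (f (c + d) - f c) (f (c + d) - f c) = 0 := by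
    rw [← map_null hf hk]; simpa using hd
  have h0' : f (c + d) - f c ≠ 0 := by
    rw [sub_ne_zero]; exact hf.1.ne (by simpa using h0)
  rw [hyper_iff hd h0, hyper_iff hd' h0', add_sub_cancel]
  rw [map_null hf hk, map_null hf hk x]
  apply or_congr_right
  constructor
  · intro H y
    obtain ⟨y, rfl⟩ := hf.2 y
    rw [← hk, ← map_null hf hk, ← map_null hf hk]
    exact H y
  · intro H y
    rw [hk, map_null hf hk, map_null hf hk y]
    exact H (f y)

/-- The light lines through `A` in the null direction `k` go to light lines in one null direction
`K`, the same for all points of `A`, and so do the null hyperplanes containing them. -/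
lemma direction_map {f : M4 → M4} (hf : Function.Bijective f)
    (hk : ∀ x y : M4, kappa x y ↔ kappa (f x) (f y)) {p v : M4} (hv : eta v v = 1)
    {g : ℝ → ℝ} (hg : ∀ a : ℝ, f (p + a • v) = p + g a • v) {k : M4} (hkk : eta k k = 0)
    (hkv : eta k v = 1) :
    ∃ K : M4, eta K v = 1 ∧ eta K K = 0 ∧
      (∀ a s : ℝ, ∃ s' : ℝ, f (p + a • v + s • k) = p + g a • v + s' • K) ∧
      (∀ (a : ℝ) (x : M4), eta (x - (p + a • v)) k = 0 → eta (f x - (p + g a • v)) K = 0) := by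
  have hv' : 0 < eta v v := by linarith
  have hk0 : k ≠ 0 := by
    rintro rfl; rw [eta_zero_left] at hkv; norm_num at hkv
  have local_dir : ∀ a : ℝ, ∃ K : M4, eta K v = 1 ∧ eta K K = 0 ∧
      (∀ s : ℝ, ∃ s' : ℝ, f (p + a • v + s • k) = p + g a • v + s' • K) ∧
      (∀ x : M4, eta (x - (p + a • v)) k = 0 ↔ eta (f x - (p + g a • v)) K = 0) := by
    intro a
    set d := f (p + a • v + k) - f (p + a • v) with hd
    have hdd : eta d d = 0 := by
      rw [hd, ← map_null hf hk]; simpa using hkk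
    have hd0 : d ≠ 0 := by
      rw [hd, sub_ne_zero]; exact hf.1.ne (by simpa using hk0)
    have hdv := null_time_ne hv' hdd hd0
    refine ⟨(eta d v)⁻¹ • d, ?_, ?_, ?_, ?_⟩
    · rw [eta_smul_left, inv_mul_cancel₀ hdv]
    · rw [eta_smul_left, eta_smul_right, hdd]; simp
    · intro s
      obtain ⟨h1, h2⟩ := (line_iff (c := p + a • v) hkk hk0).2 ⟨s, rfl⟩
      rw [map_null hf hk] at h1 h2
      obtain ⟨s', hs'⟩ := (line_iff (c := f (p + a • v)) hdd hd0).1 ⟨h1, by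
        rw [hd, add_sub_cancel]; exact h2⟩
      refine ⟨s' * eta d v, ?_⟩
      rw [hs', hg, smul_smul, mul_assoc, mul_inv_cancel₀ hdv, mul_one]
    · intro x
      rw [map_hyper hf hk hkk hk0, ← hd, hg, eta_smul_right]
      simp [hdv]
  choose K hKv hKK hKl hKh using local_dir
  -- nonparallel null hyperplanes meet, whereas distinct parallel ones do not
  have par : ∀ a, K a = K 0 := by
    intro a
    by_cases ha : a = 0
    · rw [ha]
    by_contra hne
    have hK0 : K 0 ≠ 0 := by
      intro h
      have := hKv 0
      rw [h, eta_zero_left] at this; norm_num at this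
    have hkap : eta (K a) (K 0) ≠ 0 := by
      intro h
      rcases null_perp (hKK 0) hK0 h with h | ⟨s, hs⟩
      · linarith [hKK a]
      · have h1 := hKv a
        rw [hs, eta_smul_left, hKv 0] at h1
        apply hne
        rw [hs, show s = 1 by linarith, one_smul]
    obtain ⟨z, hz⟩ := hf.2 (p + (g a / eta (K a) (K 0)) • K 0 + (g 0 / eta (K a) (K 0)) • K a)
    have c0 := eta_comm v (K 0)
    have c1 := eta_comm v (K a)
    have c2 := eta_comm (K 0) (K a)
    have za := (hKh a z).2 (by
      rw [hz]
      simp only [eta_sub_left, eta_add_left, eta_smul_left, c1, hKv, hKK, c2]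
      field_simp; ring)
    have z0 := (hKh 0 z).2 (by
      rw [hz]
      simp only [eta_sub_left, eta_add_left, eta_smul_left, c0, hKv, hKK]
      field_simp; ring)
    have c3 := eta_comm v k
    simp only [eta_sub_left, eta_add_left, eta_smul_left, c3, hkv] at za z0
    apply ha
    linarith
  refine ⟨K 0, hKv 0, hKK 0, fun a s => ?_, fun a x h => ?_⟩
  · rw [← par a]; exact hKl a s
  · rw [← par a]; exact (hKh a x).1 h

/-- Light lines through distinct points of `A` at parameters `a`, `b` can only meet halfway between
`a` and `b` in time. -/
lemma meet_param {p v K L : M4} {a b s s' : ℝ} (hv : eta v v = 1) (hKv : eta K v = 1)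
    (hLv : eta L v = 1) (hK : eta K K = 0) (hL : eta L L = 0) (hab : a ≠ b)
    (h : p + a • v + s • K = p + b • v + s' • L) : s = (b - a) / 2 := by
  have hd : (a - b) • v = s' • L - s • K := by
    have : (a - b) • v - (s' • L - s • K) =
      (p + a • v + s • K) - (p + b • v + s' • L) := by module
    rw [← sub_eq_zero, this, h, sub_self]
  have c1 := eta_comm v K
  have c2 := eta_comm v L
  have c3 := eta_comm L K
  have h1 := congrArg (fun z => eta z K) hd
  have h2 := congrArg (fun z => eta z L) hd
  have h3 := congrArg (fun z => eta z v) hd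
  simp only [eta_sub_left, eta_smul_left, c1, c2, c3, hv, hKv, hLv, hK, hL] at h1 h2 h3
  have hκ : eta K L ≠ 0 := by
    intro h0
    rw [h0] at h1
    apply hab; linarith
  have hs : s' = -s := by
    apply mul_right_cancel₀ hκ
    linarith
  linarith

/-- A causal automorphism that acts on `A` by `g` acts on the time coordinate of every event by
`g`. -/
lemma time_map {f : M4 → M4} (hf : Function.Bijective f)
    (hk : ∀ x y : M4, kappa x y ↔ kappa (f x) (f y)) {p v : M4} (hv : eta v v = 1)
    {g : ℝ → ℝ} (hg : ∀ a : ℝ, f (p + a • v) = p + g a • v) (hgi : Function.Injective g)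
    (x : M4) : eta (f x - p) v = g (eta (x - p) v) := by
  have hv' : 0 < eta v v := by linarith
  set t := eta (x - p) v with ht
  set q := x - p - t • v with hq
  have hx : x = p + t • v + q := by rw [hq]; abel
  have hqv : eta q v = 0 := by rw [hq, eta_sub_left, eta_smul_left, hv, ← ht]; ring
  by_cases hq0 : q = 0
  · rw [hx, hq0, add_zero, hg, add_sub_cancel_left, eta_smul_left, hv, mul_one]
  obtain ⟨i, hi⟩ := exists_scale one_pos (perp_neg hv' hqv hq0)
  set n := i • q with hn
  have hi0 : i ≠ 0 := by
    rintro rfl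
    rw [hn, zero_smul, eta_zero_left] at hi; norm_num at hi
  set r := i⁻¹ with hr
  have hr0 : r ≠ 0 := inv_ne_zero hi0
  have hqn : q = r • n := by rw [hn, smul_smul, inv_mul_cancel₀ hi0, one_smul]
  have hnv : eta n v = 0 := by rw [hn, eta_smul_left, hqv, mul_zero]
  obtain ⟨w, hw0, hwv, hwn⟩ := exists_perp v n
  obtain ⟨j, hj⟩ := exists_scale one_pos (perp_neg hv' hwv hw0)
  set m := j • w with hm
  have hmv : eta m v = 0 := by rw [hm, eta_smul_left, hwv, mul_zero]
  have hmn : eta m n = 0 := by rw [hm, eta_smul_left, hwn, mul_zero]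
  have cn := eta_comm v n
  have cm := eta_comm v m
  have cmn := eta_comm n m
  -- `K₁`, `K₂`, `K₃` are the image directions of `v + n`, `v - n`, `v + m`
  obtain ⟨K₁, v₁, N₁, L₁, -⟩ := direction_map hf hk hv hg (k := v + n)
    (by simp only [eta_add_left, eta_add_right, hv, cn, hnv, hi]; norm_num)
    (by simp only [eta_add_left, hv, hnv]; norm_num)
  obtain ⟨K₂, v₂, N₂, L₂, -⟩ := direction_map hf hk hv hg (k := v - n)
    (by simp only [eta_sub_left, eta_sub_right, hv, cn, hnv, hi]; norm_num)
    (by simp only [eta_sub_left, hv, hnv]; norm_num)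
  obtain ⟨K₃, v₃, -, -, H₃⟩ := direction_map hf hk hv hg (k := v + m)
    (by simp only [eta_add_left, eta_add_right, hv, cm, hmv, hj]; norm_num)
    (by simp only [eta_add_left, hv, hmv]; norm_num)
  have hab : g (t - r) ≠ g (t + r) := fun h => hr0 (by linarith [hgi h])
  have hx' : x = p + t • v + r • n := by rw [← hqn, ← hx]
  obtain ⟨s₁, hs₁⟩ := L₁ (t - r) r
  obtain ⟨s₂, hs₂⟩ := L₂ (t + r) (-r)
  rw [show p + (t - r) • v + r • (v + n) = x by rw [hx']; module] at hs₁
  rw [show p + (t + r) • v + (-r) • (v - n) = x by rw [hx']; module] at hs₂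
  have e₁ := meet_param hv v₁ v₂ N₁ N₂ hab (hs₁.symm.trans hs₂)
  -- the reflection of `x` in `A`
  set y := p + t • v - r • n with hy
  obtain ⟨s₃, hs₃⟩ := L₁ (t + r) (-r)
  obtain ⟨s₄, hs₄⟩ := L₂ (t - r) r
  rw [show p + (t + r) • v + (-r) • (v + n) = y by rw [hy]; module] at hs₃
  rw [show p + (t - r) • v + r • (v - n) = y by rw [hy]; module] at hs₄
  have e₃ := meet_param hv v₁ v₂ N₁ N₂ hab.symm (hs₃.symm.trans hs₄)
  have Hx := H₃ t x (by
    rw [hx', add_sub_cancel_left, eta_smul_left, eta_add_right, hnv, cmn, hmn]; ring)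
  have Hy := H₃ t y (by
    rw [show y - (p + t • v) = (-r) • n by rw [hy]; module, eta_smul_left, eta_add_right, hnv,
      cmn, hmn]; ring)
  have c₃ := eta_comm v K₃
  rw [hs₁] at Hx
  rw [hs₃] at Hy
  rw [hs₁]
  simp only [eta_sub_left, eta_add_left, eta_smul_left, c₃, v₃, v₁, hv, e₁, e₃] at Hx Hy ⊢
  linarith

/-- Converse part of Malament's theorem: Poincaré–Einstein simultaneity
relative to an inertial observer `A` is a nontrivial equivalence relation
invariant under every causal automorphism stabilizing `A`. -/
theorem malament_converse (p v : M4) (hunit : eta v v = 1) (hfut : v 0 > 0)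
    (A : Set M4) (hA : A = {x | ∃ t : ℝ, x = p + t • v})
    (R : M4 → M4 → Prop)
    (hR : ∀ x y : M4, R x y ↔ eta (x - y) v = 0) :
    Equivalence R ∧
    ((¬ ∀ x y : M4, R x y) ∧ (∃ a ∈ A, ∃ x ∉ A, R a x)) ∧
    (∀ f : M4 → M4, Function.Bijective f →
      (∀ x y : M4, kappa x y ↔ kappa (f x) (f y)) →
      f '' A = A →
      ∀ x y : M4, R x y ↔ R (f x) (f y)) := by
  subst hA
  refine ⟨⟨?_, ?_, ?_⟩, ⟨?_, ?_⟩, ?_⟩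
  · intro x
    rw [hR, sub_self, eta_zero_left]
  · intro x y h
    rw [hR, eta_sub_left] at h ⊢
    linarith
  · intro x y z h1 h2
    rw [hR, eta_sub_left] at h1 h2 ⊢
    linarith
  · intro h
    have := (hR v 0).1 (h v 0)
    rw [sub_zero, hunit] at this
    norm_num at this
  · obtain ⟨w, hw0, hw, -⟩ := exists_perp v v
    refine ⟨p, ⟨0, by simp⟩, p + w, ?_, ?_⟩
    · rintro ⟨t, ht⟩
      have hwt : w = t • v := add_left_cancel ht
      have h0 : t = 0 := by
        rw [hwt, eta_smul_left, hunit, mul_one] at hw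
        exact hw
      exact hw0 (by rw [hwt, h0, zero_smul])
    · rw [hR, eta_sub_left, eta_add_left, hw]; ring
  · intro f hf hk hfA x y
    have hg : ∀ a : ℝ, ∃ b : ℝ, f (p + a • v) = p + b • v := fun a => by
      have : f (p + a • v) ∈ f '' {x | ∃ t : ℝ, x = p + t • v} := ⟨_, ⟨a, rfl⟩, rfl⟩
      rw [hfA] at this
      exact this
    choose g hg using hg
    have hgi : Function.Injective g := by
      intro a b h
      have h1 : p + a • v = p + b • v := hf.1 (by rw [hg, hg, h])
      have h2 := congrArg (fun z => eta z v) (add_left_cancel h1)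
      simpa [eta_smul_left, hunit] using h2
    have T := time_map hf hk hunit hg hgi
    have e : ∀ x y : M4, R x y ↔ eta (x - p) v = eta (y - p) v := fun x y => by
      rw [hR, ← sub_eq_zero (a := eta (x - p) v), ← eta_sub_left, sub_sub_sub_cancel_right]
    rw [e, e, T, T, hgi.eq_iff]
end

section
/- (Converse part of the generalized theorem.) Let A = {p + t•v : t ∈ ℝ} be an inertial observer in Minkowski spacetime, with v a future-directed unit timelike vector, and for an event x set τ(x) = η(x − p, v) and ρ(x) = √(−η(w,w)) where w = (x − p) − τ(x)•v. For every real constant c, the conic relation R_c relative to A (x R_c y ↔ τ(x) + c·ρ(x) = τ(y) + c·ρ(y)) satisfies: (i) R_c is an equivalence relation; (ii) R_c is nontrivial, i.e., not all pairs of events are related and some event on A is related to an event not on A; (iii) R_c is invariant under every causal automorphism f with f(A) = A that is increasing on A (for a, b ∈ A, τ(a) < τ(b) implies τ(f(a)) < τ(f(b))). -/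
/-- Time coordinate of an event relative to the observer `{p + t•v}`. -/
def tau (p v x : M4) : ℝ := eta (x - p) v

/-- Spatial radius of an event relative to the observer `{p + t•v}`. -/
noncomputable def rho (p v x : M4) : ℝ :=
  Real.sqrt (-(eta ((x - p) - tau p v x • v) ((x - p) - tau p v x • v)))

/-! ### Orthogonal decomposition relative to the observer -/

/-- The component of `x - p` orthogonal to `v`. -/
noncomputable def spat (p v x : M4) : M4 := (x - p) - tau p v x • v

lemma eta_spat_v (p v x : M4) (hv : eta v v = 1) : eta (spat p v x) v = 0 := by
  have h : eta (spat p v x) v = tau p v x - tau p v x * eta v v := by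
    simp only [spat, tau, eta, Pi.sub_apply, Pi.smul_apply, smul_eq_mul]; ring
  rw [h, hv]; ring

/-- Reversed Cauchy–Schwarz in quantitative form: `η` is negative definite on the orthogonal
complement of a unit timelike vector. -/
lemma eta_neg_of_orth (v z : M4) (hv : eta v v = 1) (hz : eta z v = 0) :
    (v 0) ^ 2 * eta z z ≤ -((z 1) ^ 2 + (z 2) ^ 2 + (z 3) ^ 2) := by
  simp only [eta] at *
  have h0 : z 0 * v 0 = z 1 * v 1 + z 2 * v 2 + z 3 * v 3 := by linarith
  have hv0 : v 0 ^ 2 = 1 + v 1 ^ 2 + v 2 ^ 2 + v 3 ^ 2 := by linarith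
  have e : v 0 ^ 2 * (z 0 * z 0 - z 1 * z 1 - z 2 * z 2 - z 3 * z 3)
      = (z 0 * v 0) ^ 2 - v 0 ^ 2 * (z 1 ^ 2 + z 2 ^ 2 + z 3 ^ 2) := by ring
  rw [e, h0, hv0]
  nlinarith [sq_nonneg (z 1 * v 2 - z 2 * v 1), sq_nonneg (z 1 * v 3 - z 3 * v 1),
    sq_nonneg (z 2 * v 3 - z 3 * v 2)]

lemma v0_sq_pos (v : M4) (hv : eta v v = 1) : 0 < (v 0) ^ 2 := by
  simp only [eta] at hv
  nlinarith [sq_nonneg (v 1), sq_nonneg (v 2), sq_nonneg (v 3)]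

lemma eta_nonpos_of_orth (v z : M4) (hv : eta v v = 1) (hz : eta z v = 0) : eta z z ≤ 0 := by
  by_contra! h
  nlinarith [eta_neg_of_orth v z hv hz, mul_pos (v0_sq_pos v hv) h,
    sq_nonneg (z 1), sq_nonneg (z 2), sq_nonneg (z 3)]

lemma eq_zero_of_orth (v z : M4) (hv : eta v v = 1) (hz : eta z v = 0) (h : eta z z = 0) :
    z = 0 := by
  have h1 := eta_neg_of_orth v z hv hz
  rw [h, mul_zero] at h1
  have a1 : z 1 = 0 := by nlinarith [sq_nonneg (z 1), sq_nonneg (z 2), sq_nonneg (z 3)]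
  have a2 : z 2 = 0 := by nlinarith [sq_nonneg (z 1), sq_nonneg (z 2), sq_nonneg (z 3)]
  have a3 : z 3 = 0 := by nlinarith [sq_nonneg (z 1), sq_nonneg (z 2), sq_nonneg (z 3)]
  have a0 : z 0 = 0 := by simpa [eta, a1, a2, a3] using h
  ext i; fin_cases i <;> simp [a0, a1, a2, a3]

lemma rho_nonneg (p v x : M4) : 0 ≤ rho p v x := Real.sqrt_nonneg _

lemma rho_sq (p v x : M4) (hv : eta v v = 1) :
    rho p v x ^ 2 = -eta (spat p v x) (spat p v x) :=
  Real.sq_sqrt (by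
    have := eta_nonpos_of_orth v _ hv (eta_spat_v p v x hv)
    simp only [spat] at this; linarith)

lemma eq_of_rho_zero (p v x : M4) (hv : eta v v = 1) (h : rho p v x = 0) :
    x = p + tau p v x • v := by
  have h1 := rho_sq p v x hv
  have h2 : spat p v x = 0 := eq_zero_of_orth v _ hv (eta_spat_v p v x hv) (by
    rw [h] at h1; linarith)
  have h3 : x - p = tau p v x • v := sub_eq_zero.mp h2
  rw [← h3]; abel

lemma kappa_iff (p v x y : M4) (hv : eta v v = 1) :
    kappa x y ↔ rho p v x ^ 2 + rho p v y ^ 2 + 2 * eta (spat p v x) (spat p v y)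
      ≤ (tau p v x - tau p v y) ^ 2 := by
  have hx := eta_spat_v p v x hv
  have hy := eta_spat_v p v y hv
  have key : eta (x - y) (x - y) = (tau p v x - tau p v y) ^ 2 * eta v v
      + 2 * (tau p v x - tau p v y) * (eta (spat p v x) v - eta (spat p v y) v)
      + (eta (spat p v x) (spat p v x) + eta (spat p v y) (spat p v y)
        - 2 * eta (spat p v x) (spat p v y)) := by
    have e : x - y = (tau p v x - tau p v y) • v + (spat p v x - spat p v y) := by
      simp only [spat, sub_smul]; abel
    rw [e]
    generalize spat p v x = a
    generalize spat p v y = b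
    generalize tau p v x - tau p v y = s
    simp only [eta, Pi.add_apply, Pi.sub_apply, Pi.smul_apply, smul_eq_mul]; ring
  rw [kappa, key, hx, hy, hv, rho_sq p v x hv, rho_sq p v y hv]
  constructor <;> intro h <;> linarith

/-! ### Events in cylindrical coordinates -/

lemma tau_cyl (p v n : M4) (t r : ℝ) (hv : eta v v = 1) (hn : eta n v = 0) :
    tau p v (p + t • v + r • n) = t := by
  have : tau p v (p + t • v + r • n) = t * eta v v + r * eta n v := by
    simp only [tau, eta, Pi.add_apply, Pi.sub_apply, Pi.smul_apply, smul_eq_mul]; ring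
  rw [this, hv, hn]; ring

lemma spat_cyl (p v n : M4) (t r : ℝ) (hv : eta v v = 1) (hn : eta n v = 0) :
    spat p v (p + t • v + r • n) = r • n := by
  rw [spat, tau_cyl p v n t r hv hn]; abel

lemma rho_cyl (p v n : M4) (t r : ℝ) (hv : eta v v = 1) (hn : eta n v = 0)
    (hnn : eta n n = -1) : rho p v (p + t • v + r • n) = |r| := by
  have h := rho_sq p v (p + t • v + r • n) hv
  have e : eta (r • n) (r • n) = r ^ 2 * eta n n := by
    simp only [eta, Pi.smul_apply, smul_eq_mul]; ring
  rw [spat_cyl p v n t r hv hn, e, hnn] at h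
  rw [← abs_of_nonneg (rho_nonneg p v _)]
  exact (sq_eq_sq_iff_abs_eq_abs _ _).mp (by linarith)

lemma tau_line (p v : M4) (t : ℝ) (hv : eta v v = 1) : tau p v (p + t • v) = t := by
  have := tau_cyl p v 0 t 0 hv (by simp [eta])
  simpa using this

lemma spat_line (p v : M4) (t : ℝ) (hv : eta v v = 1) : spat p v (p + t • v) = 0 := by
  rw [spat, tau_line p v t hv]; abel

lemma rho_line (p v : M4) (t : ℝ) (hv : eta v v = 1) : rho p v (p + t • v) = 0 := by
  have h := rho_sq p v (p + t • v) hv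
  rw [spat_line p v t hv] at h
  simpa [eta] using h

/-- The bounds of the interval of observer times not causally connected to `x` are
`τ x - ρ x` and `τ x + ρ x`. -/
lemma kappa_line (p v x : M4) (t : ℝ) (hv : eta v v = 1) :
    kappa x (p + t • v) ↔ t ≤ tau p v x - rho p v x ∨ tau p v x + rho p v x ≤ t := by
  rw [kappa_iff p v _ _ hv, tau_line p v t hv, rho_line p v t hv, spat_line p v t hv]
  have e : eta (spat p v x) 0 = 0 := by simp [eta]
  rw [e]
  have hr := rho_nonneg p v x
  constructor
  · intro h
    by_contra! h2
    nlinarith [mul_pos (sub_pos.mpr h2.1) (sub_pos.mpr h2.2)]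
  · rintro (h | h) <;> nlinarith

/-- Minkowski spacetime has dimension four, so a unit timelike vector and two further vectors
have a common orthogonal unit spacelike vector. -/
lemma exists_orth (v a b : M4) (hv : eta v v = 1) :
    ∃ n : M4, eta n v = 0 ∧ eta a n = 0 ∧ eta b n = 0 ∧ eta n n = -1 := by
  let L : M4 →ₗ[ℝ] (Fin 3 → ℝ) := Matrix.mulVecLin
    !![v 0, -v 1, -v 2, -v 3; a 0, -a 1, -a 2, -a 3; b 0, -b 1, -b 2, -b 3]
  have hker : LinearMap.ker L ≠ ⊥ := LinearMap.ker_ne_bot_of_finrank_lt (by simp)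
  obtain ⟨z, hz, hz0⟩ := Submodule.exists_mem_ne_zero_of_ne_bot hker
  rw [LinearMap.mem_ker] at hz
  have h0 := congrFun hz 0
  have h1 := congrFun hz 1
  have h2 := congrFun hz 2
  simp [L, Matrix.mulVec, dotProduct, Fin.sum_univ_four] at h0 h1 h2
  have hzv : eta z v = 0 := by simp only [eta]; linarith
  have hza : eta a z = 0 := by simp only [eta]; linarith
  have hzb : eta b z = 0 := by simp only [eta]; linarith
  have hneg : eta z z < 0 := lt_of_le_of_ne (eta_nonpos_of_orth v z hv hzv)
    fun h => hz0 (eq_zero_of_orth v z hv hzv h)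
  have hs : Real.sqrt (-eta z z) ^ 2 = -eta z z := Real.sq_sqrt (by linarith)
  have hsp : 0 < Real.sqrt (-eta z z) := Real.sqrt_pos.mpr (by linarith)
  set s := Real.sqrt (-eta z z)
  have sl : ∀ q : M4, eta (s⁻¹ • z) q = s⁻¹ * eta z q := fun q => by
    simp only [eta, Pi.smul_apply, smul_eq_mul]; ring
  have sr : ∀ q : M4, eta q (s⁻¹ • z) = s⁻¹ * eta q z := fun q => by
    simp only [eta, Pi.smul_apply, smul_eq_mul]; ring
  refine ⟨s⁻¹ • z, by rw [sl, hzv, mul_zero], by rw [sr, hza, mul_zero],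
    by rw [sr, hzb, mul_zero], ?_⟩
  rw [sl, sr]
  have : eta z z = -s ^ 2 := by linarith
  rw [this]; field_simp

/-! ### An order-theoretic criterion for midpoints -/

/-- The sphere of events whose interval of causally disconnected observer times is `(u, w)`. -/
def sph (p v : M4) (u w : ℝ) : Set M4 :=
  {x | tau p v x - rho p v x = u ∧ tau p v x + rho p v x = w}

/-- For some `w' > w`, two events of `sph u w` have causal cones that together cover
`sph m w'`. -/
def Covers (p v : M4) (u w m : ℝ) : Prop :=
  ∃ w', w < w' ∧ ∃ x₁ ∈ sph p v u w, ∃ x₂ ∈ sph p v u w, ∀ y ∈ sph p v m w',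
    kappa x₁ y ∨ kappa x₂ y

/-- The covering property, which is phrased through causal connectibility, detects whether `m` lies beyond the midpoint of `u` and `w`. -/
lemma covers_iff (p v : M4) (hv : eta v v = 1) (u w m : ℝ) (hum : u < m) (hmw : m < w) :
    Covers p v u w m ↔ (u + w) / 2 < m := by
  constructor
  · rintro ⟨w', hw', x₁, ⟨h1u, h1w⟩, x₂, ⟨h2u, h2w⟩, H⟩
    by_contra! hm
    -- An event of the target sphere in a direction orthogonal to both `x₁` and `x₂` escapes both.
    obtain ⟨n, hnv, hn1, hn2, hnn⟩ := exists_orth v (spat p v x₁) (spat p v x₂) hv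
    have hr0 : 0 ≤ (w' - m) / 2 := by linarith
    set y := p + ((m + w') / 2) • v + ((w' - m) / 2) • n with hy
    have ty : tau p v y = (m + w') / 2 := tau_cyl p v n _ _ hv hnv
    have ry : rho p v y = (w' - m) / 2 := by
      rw [hy, rho_cyl p v n _ _ hv hnv hnn, abs_of_nonneg hr0]
    have sy : spat p v y = ((w' - m) / 2) • n := spat_cyl p v n _ _ hv hnv
    have sr : ∀ q : M4, eta q (spat p v y) = (w' - m) / 2 * eta q n := fun q => by
      rw [sy]; simp only [eta, Pi.smul_apply, smul_eq_mul]; ring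
    have aux : ∀ x : M4, tau p v x - rho p v x = u → tau p v x + rho p v x = w →
        eta (spat p v x) n = 0 → ¬ kappa x y := by
      intro x hu hw hn hk
      rw [kappa_iff p v x y hv, sr, hn, ty, ry] at hk
      have t : tau p v x = (u + w) / 2 := by linarith
      have r : rho p v x = (w - u) / 2 := by linarith
      rw [t, r] at hk
      nlinarith [mul_nonneg (sub_nonneg.mpr hm) (sub_pos.mpr hw').le,
        mul_pos (sub_pos.mpr (hum.trans hmw)) (sub_pos.mpr hmw)]
    rcases H y ⟨by rw [ty, ry]; ring, by rw [ty, ry]; ring⟩ with h | h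
    · exact aux x₁ h1u h1w hn1 h
    · exact aux x₂ h2u h2w hn2 h
  · intro hm
    have hD : 0 < 2 * m - u - w := by linarith
    obtain ⟨n, hnv, -, -, hnn⟩ := exists_orth v v v hv
    have hr0 : 0 ≤ (w - u) / 2 := by linarith
    -- `w' = w + d` is the value for which `(τ - τ')² = ρ² + ρ'²`, where the caps are hemispheres.
    obtain ⟨d, hd⟩ : ∃ d, d = (w - u) * (w - m) / (2 * m - u - w) := ⟨_, rfl⟩
    have hdpos : 0 < d := by
      rw [hd]; exact div_pos (mul_pos (by linarith) (by linarith)) hD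
    have hdD : d * (2 * m - u - w) = (w - u) * (w - m) := by
      rw [hd, div_mul_cancel₀ _ hD.ne']
    have mem : ∀ r : ℝ, |r| = (w - u) / 2 → p + ((u + w) / 2) • v + r • n ∈ sph p v u w := by
      intro r hr
      constructor
      · rw [tau_cyl p v n _ _ hv hnv, rho_cyl p v n _ _ hv hnv hnn, hr]; ring
      · rw [tau_cyl p v n _ _ hv hnv, rho_cyl p v n _ _ hv hnv hnn, hr]; ring
    refine ⟨w + d, by linarith, _, mem ((w - u) / 2) (abs_of_nonneg hr0), _,
      mem (-((w - u) / 2)) (by rw [abs_neg, abs_of_nonneg hr0]), ?_⟩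
    rintro y ⟨hyu, hyw⟩
    have t : tau p v y = (m + (w + d)) / 2 := by linarith
    have r : rho p v y = ((w + d) - m) / 2 := by linarith
    have sl : ∀ (s : ℝ) (q : M4), eta (s • n) q = s * eta n q := fun s q => by
      simp only [eta, Pi.smul_apply, smul_eq_mul]; ring
    have ineq : ((w - u) / 2) ^ 2 + (((w + d) - m) / 2) ^ 2
        = ((u + w) / 2 - (m + (w + d)) / 2) ^ 2 := by nlinarith
    simp only [kappa_iff p v _ y hv, tau_cyl p v n _ _ hv hnv, rho_cyl p v n _ _ hv hnv hnn,
      spat_cyl p v n _ _ hv hnv, sl, t, r, sq_abs]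
    rcases le_total (eta n (spat p v y)) 0 with h | h
    · left; nlinarith [mul_nonneg hr0 (neg_nonneg.mpr h)]
    · right; nlinarith [mul_nonneg hr0 h]

/-! ### The action on the observer is affine -/

lemma affine_of_midpoint (φ : ℝ → ℝ) (hm : StrictMono φ) (hs : Function.Surjective φ)
    (h : ∀ u w, u < w → φ ((u + w) / 2) = (φ u + φ w) / 2) :
    ∃ α β : ℝ, 0 < α ∧ ∀ t, φ t = α * t + β := by
  have h' : ∀ u w, φ ((u + w) / 2) = (φ u + φ w) / 2 := by
    intro u w
    rcases lt_trichotomy u w with hl | rfl | hl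
    · exact h u w hl
    · simp
    · rw [add_comm u, h w u hl, add_comm (φ w)]
  let g : ℝ →+ ℝ :=
    { toFun := fun t => φ t - φ 0
      map_zero' := sub_self _
      map_add' := fun a b => by
        have h1 := h' a b
        have h2 := h' (a + b) 0
        rw [add_zero] at h2
        linarith }
  have hc : Continuous g :=
    (hm.monotone.continuous_of_surjective hs).sub continuous_const
  have key : ∀ t, φ t - φ 0 = t * (φ 1 - φ 0) := fun t => by
    have := map_real_smul g hc t 1
    simpa [g] using this
  refine ⟨φ 1 - φ 0, φ 0, sub_pos.mpr (hm one_pos), fun t => ?_⟩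
  linarith [key t]

/-- A causal map acting on the observer by `φ` acts by `φ` on the two times at which the light
cone of an event meets the observer. -/
lemma endpoints_map (p v : M4) (hv : eta v v = 1) (f : M4 → M4)
    (hk : ∀ x y : M4, kappa x y ↔ kappa (f x) (f y)) (φ : ℝ → ℝ)
    (hφ : ∀ t, f (p + t • v) = p + φ t • v) (hm : StrictMono φ) (hs : Function.Surjective φ)
    (x : M4) :
    tau p v (f x) - rho p v (f x) = φ (tau p v x - rho p v x) ∧
    tau p v (f x) + rho p v (f x) = φ (tau p v x + rho p v x) := by
  rcases (rho_nonneg p v x).eq_or_lt with h0 | h0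
  · have hx := eq_of_rho_zero p v x hv h0.symm
    rw [← h0]
    generalize tau p v x = t at hx
    subst hx
    rw [hφ, tau_line p v _ hv, rho_line p v _ hv]
    simp
  · obtain ⟨s, hsU⟩ := hs (tau p v (f x) - rho p v (f x))
    obtain ⟨r, hrW⟩ := hs (tau p v (f x) + rho p v (f x))
    have H : ∀ t, (t ≤ tau p v x - rho p v x ∨ tau p v x + rho p v x ≤ t) ↔ (t ≤ s ∨ r ≤ t) := by
      intro t
      rw [← kappa_line p v x t hv, hk, hφ, kappa_line p v _ _ hv, ← hsU, ← hrW,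
        hm.le_iff_le, hm.le_iff_le]
    rw [← hsU, ← hrW]
    generalize tau p v x = a at *
    generalize rho p v x = b at *
    have hmid : ¬ (a ≤ s ∨ r ≤ a) := by
      rw [← H]; push Not; constructor <;> linarith
    push Not at hmid
    have e1 : s = a - b := by
      apply le_antisymm
      · rcases (H s).mpr (Or.inl le_rfl) with h | h <;> linarith
      · rcases (H (a - b)).mp (Or.inl le_rfl) with h | h <;> linarith
    have e2 : r = a + b := by
      apply le_antisymm
      · rcases (H (a + b)).mp (Or.inr le_rfl) with h | h <;> linarith
      · rcases (H r).mpr (Or.inr le_rfl) with h | h <;> linarith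
    rw [e1, e2]
    exact ⟨rfl, rfl⟩

/-- The action of a causal bijection on the observer is affine: it preserves the spheres
`sph` and hence the covering property, so by `covers_iff` it preserves midpoints. -/
lemma affine_of_causal (p v : M4) (hv : eta v v = 1) (f : M4 → M4)
    (hf : Function.Bijective f)
    (hk : ∀ x y : M4, kappa x y ↔ kappa (f x) (f y)) (φ : ℝ → ℝ)
    (hφ : ∀ t, f (p + t • v) = p + φ t • v) (hm : StrictMono φ) (hs : Function.Surjective φ) :
    ∃ α β : ℝ, 0 < α ∧ ∀ t, φ t = α * t + β := by
  have hsph : ∀ x u w, f x ∈ sph p v (φ u) (φ w) ↔ x ∈ sph p v u w := by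
    intro x u w
    obtain ⟨h1, h2⟩ := endpoints_map p v hv f hk φ hφ hm hs x
    simp only [sph, Set.mem_ofPred_eq, h1, h2, hm.injective.eq_iff]
  have hcov : ∀ u w m, Covers p v (φ u) (φ w) (φ m) ↔ Covers p v u w m := by
    intro u w m
    unfold Covers
    rw [hs.exists]
    refine exists_congr fun w' => and_congr hm.lt_iff_lt ?_
    rw [hf.surjective.exists]
    refine exists_congr fun x₁ => and_congr (hsph _ _ _) ?_
    rw [hf.surjective.exists]
    refine exists_congr fun x₂ => and_congr (hsph _ _ _) ?_
    rw [hf.surjective.forall]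
    exact forall_congr' fun y =>
      imp_congr (hsph _ _ _) (or_congr (hk _ _).symm (hk _ _).symm)
  have hmid : ∀ u w m, u < m → m < w → ((φ u + φ w) / 2 < φ m ↔ (u + w) / 2 < m) := by
    intro u w m h1 h2
    rw [← covers_iff p v hv _ _ _ (hm h1) (hm h2), hcov, covers_iff p v hv _ _ _ h1 h2]
  refine affine_of_midpoint φ hm hs fun u w huw => le_antisymm ?_ ?_
  · have := hmid u w ((u + w) / 2) (by linarith) (by linarith)
    by_contra! h
    exact lt_irrefl _ (this.mp h)
  · -- Apply the criterion to the preimage of the midpoint of `φ u` and `φ w`.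
    obtain ⟨m, hm'⟩ := hs ((φ u + φ w) / 2)
    have := hm huw
    have h1 : u < m := hm.lt_iff_lt.mp (by linarith)
    have h2 : m < w := hm.lt_iff_lt.mp (by linarith)
    have h3 := hmid u w m h1 h2
    rw [← hm']
    apply hm.monotone
    by_contra! h
    have := h3.mpr h
    linarith

/-! ### Invariance of the conic relations -/

/-- Converse part of the generalized Malament theorem: for every real `c`, the
conic relation `R_c` relative to an inertial observer `A` is a nontrivial
equivalence relation invariant under every causal automorphism stabilizing `A`
that is increasing on `A`. -/
theorem malament_generalized_converse (p v : M4) (hunit : eta v v = 1)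
    (hfut : v 0 > 0)
    (A : Set M4) (hA : A = {x | ∃ t : ℝ, x = p + t • v})
    (c : ℝ) (R : M4 → M4 → Prop)
    (hR : ∀ x y : M4,
      R x y ↔ tau p v x + c * rho p v x = tau p v y + c * rho p v y) :
    Equivalence R ∧
    ((¬ ∀ x y : M4, R x y) ∧ (∃ a ∈ A, ∃ x ∉ A, R a x)) ∧
    (∀ f : M4 → M4, Function.Bijective f →
      (∀ x y : M4, kappa x y ↔ kappa (f x) (f y)) →
      f '' A = A →
      (∀ a ∈ A, ∀ b ∈ A, tau p v a < tau p v b → tau p v (f a) < tau p v (f b)) →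
      ∀ x y : M4, R x y ↔ R (f x) (f y)) := by
  refine ⟨⟨fun x => (hR x x).mpr rfl, fun h => (hR _ _).mpr ((hR _ _).mp h).symm,
    fun h k => (hR _ _).mpr (((hR _ _).mp h).trans ((hR _ _).mp k))⟩, ⟨?_, ?_⟩, ?_⟩
  · intro h
    have h1 := (hR _ _).mp (h (p + (0 : ℝ) • v) (p + (1 : ℝ) • v))
    rw [tau_line p v _ hunit, rho_line p v _ hunit, tau_line p v _ hunit,
      rho_line p v _ hunit] at h1
    linarith
  · -- The event at time `-c` and radius `1` is related to the event `p` of the observer.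
    obtain ⟨n, hnv, -, -, hnn⟩ := exists_orth v v v hunit
    have hr : rho p v (p + (-c) • v + (1 : ℝ) • n) = 1 := by
      rw [rho_cyl p v n _ _ hunit hnv hnn, abs_one]
    refine ⟨p + (0 : ℝ) • v, by rw [hA]; exact ⟨0, rfl⟩,
      p + (-c) • v + (1 : ℝ) • n, ?_, (hR _ _).mpr ?_⟩
    · rw [hA]
      rintro ⟨t, ht⟩
      rw [ht, rho_line p v t hunit] at hr
      exact zero_ne_one hr
    · rw [tau_line p v _ hunit, rho_line p v _ hunit, hr, tau_cyl p v n _ _ hunit hnv]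
      ring
  · intro f hf hk hfA hinc x y
    subst hA
    have hmem : ∀ t : ℝ, ∃ s : ℝ, f (p + t • v) = p + s • v := by
      intro t
      have : f (p + t • v) ∈ f '' {x | ∃ t : ℝ, x = p + t • v} := ⟨_, ⟨t, rfl⟩, rfl⟩
      rw [hfA] at this
      exact this
    choose φ hφ using hmem
    have hm : StrictMono φ := by
      intro a b hab
      have := hinc (p + a • v) ⟨a, rfl⟩ (p + b • v) ⟨b, rfl⟩
        (by rwa [tau_line p v _ hunit, tau_line p v _ hunit])
      rwa [hφ, hφ, tau_line p v _ hunit, tau_line p v _ hunit] at this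
    have hs : Function.Surjective φ := by
      intro s
      have : p + s • v ∈ f '' {x | ∃ t : ℝ, x = p + t • v} := by
        rw [hfA]; exact ⟨s, rfl⟩
      obtain ⟨_, ⟨t, rfl⟩, ht⟩ := this
      refine ⟨t, ?_⟩
      have h2 := congrArg (tau p v) ht
      rwa [hφ, tau_line p v _ hunit, tau_line p v _ hunit] at h2
    obtain ⟨α, β, hα, haff⟩ := affine_of_causal p v hunit f hf hk φ hφ hm hs
    have hcoord : ∀ z, tau p v (f z) = α * tau p v z + β ∧ rho p v (f z) = α * rho p v z := by
      intro z
      obtain ⟨h1, h2⟩ := endpoints_map p v hunit f hk φ hφ hm hs z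
      rw [haff] at h1 h2
      constructor <;> linarith
    have hrel : ∀ z, tau p v (f z) + c * rho p v (f z)
        = α * (tau p v z + c * rho p v z) + β := by
      intro z
      rw [(hcoord z).1, (hcoord z).2]; ring
    rw [hR, hR, hrel, hrel, add_left_inj, mul_right_inj' hα.ne']
end
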